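/- For any 0<β<1, any μ ≥ 0, and any real numbers 0 ≤ t < a < b < c < d: ((d−t)^{1−β} − (d−a)^{1−β} + μ(a−t)) / ((d−a)^{1−β} − (d−b)^{1−β} + μ(b−a)) > ((c−t)^{1−β} − (c−a)^{1−β} + μ(a−t)) / ((c−a)^{1−β} − (c−b)^{1−β} + μ(b−a)). -/

import Mathlib

/-!
Put `ψ y = y ^ (1 - β) + μ * y`, so that both sides are ratios of consecutive increments of
`s ↦ -ψ (d - s)` and `s ↦ -ψ (c - s)` over `[t, a]` and `[a, b]`. By Cauchy's mean value theorem,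
the comparison reduces to `ψ' (d - s) / ψ' (c - s)` being strictly decreasing in `s`, that is, to
`ψ'` being strictly log-convex. The function `y ^ (-β)` is strictly log-convex, and adding a
nonnegative constant to a decreasing function preserves this.
-/

open Set

section CauchyMeanValue

variable {f f' g g' : ℝ → ℝ} {t a b : ℝ}

lemma strictMonoOn_Icc_of_hasDerivAt_pos (hfc : ContinuousOn f (Icc a b))
    (hf : ∀ x ∈ Ioo a b, HasDerivAt f (f' x) x) (hf' : ∀ x ∈ Ioo a b, 0 < f' x) :
    StrictMonoOn f (Icc a b) := by
  rw [← interior_Icc] at hf hf'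
  exact strictMonoOn_of_hasDerivWithinAt_pos (convex_Icc a b) hfc
    (fun x hx ↦ (hf x hx).hasDerivWithinAt) hf'

lemma exists_sub_div_sub_eq_div_of_hasDerivAt (hab : a < b)
    (hfc : ContinuousOn f (Icc a b)) (hf : ∀ x ∈ Ioo a b, HasDerivAt f (f' x) x)
    (hgc : ContinuousOn g (Icc a b)) (hg : ∀ x ∈ Ioo a b, HasDerivAt g (g' x) x)
    (hg' : ∀ x ∈ Ioo a b, 0 < g' x) :
    ∃ ξ ∈ Ioo a b, (f b - f a) / (g b - g a) = f' ξ / g' ξ := by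
  obtain ⟨ξ, hξ, hratio⟩ := exists_ratio_hasDerivAt_eq_ratio_slope f f' hab hfc hf g g' hgc hg
  have hgab : g a < g b := strictMonoOn_Icc_of_hasDerivAt_pos hgc hg hg'
    (left_mem_Icc.2 hab.le) (right_mem_Icc.2 hab.le) hab
  refine ⟨ξ, hξ, (div_eq_div_iff (sub_pos.2 hgab).ne' (hg' ξ hξ).ne').2 ?_⟩
  rw [← hratio, mul_comm]

lemma sub_div_sub_lt_sub_div_sub_of_strictAntiOn_deriv_div (hta : t < a) (hab : a < b)
    (hfc : ContinuousOn f (Icc t b)) (hf : ∀ x ∈ Ioo t b, HasDerivAt f (f' x) x)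
    (hf' : ∀ x ∈ Ioo t b, 0 < f' x)
    (hgc : ContinuousOn g (Icc t b)) (hg : ∀ x ∈ Ioo t b, HasDerivAt g (g' x) x)
    (hg' : ∀ x ∈ Ioo t b, 0 < g' x)
    (hanti : StrictAntiOn (fun x ↦ f' x / g' x) (Ioo t b)) :
    (g a - g t) / (g b - g a) < (f a - f t) / (f b - f a) := by
  have hIcc_left : Icc t a ⊆ Icc t b := Icc_subset_Icc_right hab.le
  have hIoo_left : Ioo t a ⊆ Ioo t b := Ioo_subset_Ioo_right hab.le
  have hIcc_right : Icc a b ⊆ Icc t b := Icc_subset_Icc_left hta.le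
  have hIoo_right : Ioo a b ⊆ Ioo t b := Ioo_subset_Ioo_left hta.le
  obtain ⟨ξ, hξ, hξ_eq⟩ := exists_sub_div_sub_eq_div_of_hasDerivAt hta
    (hfc.mono hIcc_left) (fun x hx ↦ hf x (hIoo_left hx))
    (hgc.mono hIcc_left) (fun x hx ↦ hg x (hIoo_left hx)) (fun x hx ↦ hg' x (hIoo_left hx))
  obtain ⟨η, hη, hη_eq⟩ := exists_sub_div_sub_eq_div_of_hasDerivAt hab
    (hfc.mono hIcc_right) (fun x hx ↦ hf x (hIoo_right hx))
    (hgc.mono hIcc_right) (fun x hx ↦ hg x (hIoo_right hx)) (fun x hx ↦ hg' x (hIoo_right hx))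
  have ht_mem : t ∈ Icc t b := left_mem_Icc.2 (hta.trans hab).le
  have ha_mem : a ∈ Icc t b := ⟨hta.le, hab.le⟩
  have hb_mem : b ∈ Icc t b := right_mem_Icc.2 (hta.trans hab).le
  have hg_mono : StrictMonoOn g (Icc t b) := strictMonoOn_Icc_of_hasDerivAt_pos hgc hg hg'
  have hg_left : 0 < g a - g t := sub_pos.2 (hg_mono ht_mem ha_mem hta)
  have hg_right : 0 < g b - g a := sub_pos.2 (hg_mono ha_mem hb_mem hab)
  have hf_right : 0 < f b - f a :=
    sub_pos.2 (strictMonoOn_Icc_of_hasDerivAt_pos hfc hf hf' ha_mem hb_mem hab)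
  have hcross : (f b - f a) / (g b - g a) < (f a - f t) / (g a - g t) := by
    rw [hξ_eq, hη_eq]
    exact hanti (hIoo_left hξ) (hIoo_right hη) (hξ.2.trans hη.1)
  rw [div_lt_div_iff₀ hg_right hg_left] at hcross
  rw [div_lt_div_iff₀ hg_right hf_right]
  linarith

end CauchyMeanValue

section LogConvex

lemma add_lt_add_of_mul_lt_mul_of_le {p q r s : ℝ} (hp : 0 < p) (hq : q ≤ p) (hr : r ≤ p)
    (h : q * r < s * p) : q + r < s + p := by
  have hprod : 0 ≤ (p - q) * (p - r) := mul_nonneg (sub_nonneg.2 hq) (sub_nonneg.2 hr)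
  refine lt_of_mul_lt_mul_left ?_ hp.le
  linarith

lemma strictMonoOn_add_const_div_add_const {f : ℝ → ℝ} {μ δ : ℝ} (hμ : 0 ≤ μ) (hδ : 0 ≤ δ)
    (hpos : ∀ y ∈ Ioi (0 : ℝ), 0 < f y) (hanti : AntitoneOn f (Ioi 0))
    (hratio : StrictMonoOn (fun y ↦ f (y + δ) / f y) (Ioi 0)) :
    StrictMonoOn (fun y ↦ (f (y + δ) + μ) / (f y + μ)) (Ioi 0) := by
  intro v hv u hu hvu
  have hvδ : v + δ ∈ Ioi (0 : ℝ) := add_pos_of_pos_of_nonneg hv hδ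
  have hmul : f (v + δ) * f u < f (u + δ) * f v :=
    (div_lt_div_iff₀ (hpos v hv) (hpos u hu)).1 (hratio hv hu hvu)
  have hadd : f (v + δ) + f u < f (u + δ) + f v :=
    add_lt_add_of_mul_lt_mul_of_le (hpos v hv) (hanti hv hvδ (le_add_of_nonneg_right hδ))
      (hanti hv hu hvu.le) hmul
  have hμadd : μ * (f (v + δ) + f u) ≤ μ * (f (u + δ) + f v) :=
    mul_le_mul_of_nonneg_left hadd.le hμ
  refine (div_lt_div_iff₀ (add_pos_of_pos_of_nonneg (hpos v hv) hμ)
    (add_pos_of_pos_of_nonneg (hpos u hu) hμ)).2 ?_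
  linarith

lemma strictMonoOn_rpow_add_div_rpow {q δ : ℝ} (hq : q < 0) (hδ : 0 < δ) :
    StrictMonoOn (fun y : ℝ ↦ (y + δ) ^ q / y ^ q) (Ioi 0) := by
  intro v (hv : 0 < v) u (hu : 0 < u) hvu
  have hbase : (u + δ) / u < (v + δ) / v := by
    rw [div_lt_div_iff₀ hu hv]
    linarith [mul_lt_mul_of_pos_left hvu hδ]
  have hpow : ((v + δ) / v) ^ q < ((u + δ) / u) ^ q :=
    Real.rpow_lt_rpow_of_neg (by positivity) hbase hq
  rwa [Real.div_rpow (by positivity) hv.le, Real.div_rpow (by positivity) hu.le] at hpow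

lemma strictMonoOn_const_mul_rpow_add_const_ratio {k q μ δ : ℝ} (hk : 0 < k) (hq : q < 0)
    (hμ : 0 ≤ μ) (hδ : 0 < δ) :
    StrictMonoOn (fun y : ℝ ↦ (k * (y + δ) ^ q + μ) / (k * y ^ q + μ)) (Ioi 0) := by
  refine strictMonoOn_add_const_div_add_const (f := fun y ↦ k * y ^ q) hμ hδ.le
    (fun y hy ↦ mul_pos hk (Real.rpow_pos_of_pos hy q)) (fun v hv u _ hvu ↦ ?_) ?_
  · exact mul_le_mul_of_nonneg_left (Real.rpow_le_rpow_of_nonpos hv hvu hq.le) hk.le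
  · simpa only [mul_div_mul_left _ _ hk.ne'] using strictMonoOn_rpow_add_div_rpow hq hδ

end LogConvex

lemma hasDerivAt_rpow_add_const_mul {p μ y : ℝ} (hy : y ≠ 0) :
    HasDerivAt (fun y : ℝ ↦ y ^ p + μ * y) (p * y ^ (p - 1) + μ) y := by
  simpa using (Real.hasDerivAt_rpow_const (Or.inl hy)).fun_add ((hasDerivAt_id y).const_mul μ)

/-- The hypothesis `hratio` is strict log-convexity of `ψ'`, in multiplicative form. -/
theorem stmt16_general {ψ ψ' : ℝ → ℝ} {t a b c d : ℝ} (hψc : ContinuousOn ψ (Ici 0))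
    (hψ : ∀ y ∈ Ioi 0, HasDerivAt ψ (ψ' y) y) (hψ' : ∀ y ∈ Ioi 0, 0 < ψ' y)
    (hratio : ∀ δ > 0, StrictMonoOn (fun y ↦ ψ' (y + δ) / ψ' y) (Ioi 0))
    (hta : t < a) (hab : a < b) (hbc : b ≤ c) (hcd : c < d) :
    (ψ (c - t) - ψ (c - a)) / (ψ (c - a) - ψ (c - b)) <
      (ψ (d - t) - ψ (d - a)) / (ψ (d - a) - ψ (d - b)) := by
  have hcont : ∀ x, b ≤ x → ContinuousOn (fun s ↦ -ψ (x - s)) (Icc t b) := fun x hx ↦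
    (hψc.comp (by fun_prop) fun s hs ↦ sub_nonneg.2 (hs.2.trans hx)).neg
  have hmem : ∀ x, b ≤ x → ∀ s ∈ Ioo t b, x - s ∈ Ioi 0 := fun x hx s hs ↦
    sub_pos.2 (hs.2.trans_le hx)
  have hderiv : ∀ x, b ≤ x → ∀ s ∈ Ioo t b, HasDerivAt (fun s ↦ -ψ (x - s)) (ψ' (x - s)) s :=
    fun x hx s hs ↦ by simpa using ((hψ _ (hmem x hx s hs)).comp_const_sub x s).fun_neg
  have hanti : StrictAntiOn (fun s ↦ ψ' (d - s) / ψ' (c - s)) (Ioo t b) := by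
    intro r hr s hs hrs
    simpa using hratio (d - c) (sub_pos.2 hcd) (hmem c hbc s hs) (hmem c hbc r hr)
      (sub_lt_sub_left hrs c)
  have hbd : b ≤ d := hbc.trans hcd.le
  simpa only [neg_sub_neg] using sub_div_sub_lt_sub_div_sub_of_strictAntiOn_deriv_div hta hab
    (hcont d hbd) (hderiv d hbd) (fun s hs ↦ hψ' _ (hmem d hbd s hs))
    (hcont c hbc) (hderiv c hbc) (fun s hs ↦ hψ' _ (hmem c hbc s hs)) hanti

/-- Lemma A.5 (lem:pre-G): for `0 < β < 1`, `μ ≥ 0` and `0 ≤ t < a < b < c < d`,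
`((d−t)^{1−β} − (d−a)^{1−β} + μ(a−t)) / ((d−a)^{1−β} − (d−b)^{1−β} + μ(b−a))
  > ((c−t)^{1−β} − (c−a)^{1−β} + μ(a−t)) / ((c−a)^{1−β} − (c−b)^{1−β} + μ(b−a))`. -/
theorem stmt16 (β μ t a b c d : ℝ) (hβ0 : 0 < β) (hβ1 : β < 1) (hμ : 0 ≤ μ)
    (ht : 0 ≤ t) (hta : t < a) (hab : a < b) (hbc : b < c) (hcd : c < d) :
    ((d - t) ^ (1 - β) - (d - a) ^ (1 - β) + μ * (a - t)) /
        ((d - a) ^ (1 - β) - (d - b) ^ (1 - β) + μ * (b - a)) >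
      ((c - t) ^ (1 - β) - (c - a) ^ (1 - β) + μ * (a - t)) /
        ((c - a) ^ (1 - β) - (c - b) ^ (1 - β) + μ * (b - a)) := by
  have hp : 0 < 1 - β := sub_pos.2 hβ1
  convert stmt16_general (ψ := fun y ↦ y ^ (1 - β) + μ * y)
    (ψ' := fun y ↦ (1 - β) * y ^ (1 - β - 1) + μ)
    ((Real.continuous_rpow_const hp.le).add (continuous_const_mul μ)).continuousOn
    (fun y hy ↦ hasDerivAt_rpow_add_const_mul (ne_of_gt hy))
    (fun y hy ↦ add_pos_of_pos_of_nonneg (mul_pos hp (Real.rpow_pos_of_pos hy _)) hμ)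
    (fun δ hδ ↦ strictMonoOn_const_mul_rpow_add_const_ratio hp (by linarith) hμ hδ)
    hta hab hbc.le hcd using 2 <;> ring
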